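/- Let Ω be a finite nonempty set, and let < and ≤ be two nonempty binary relations on the powerset of Ω such that < is contained in ≤. Then there exists a probability measure μ on Ω such that for all A, B ⊆ Ω, A < B implies μ(A) < μ(B) and A ≤ B implies μ(A) ≤ μ(B), if and only if the following condition (S+) holds: for every n ≥ 1 and all sequences (A_i)_{i≤n}, (B_i)_{i≤n} of subsets of Ω with (A_i)_{i≤n} ≤₀ (B_i)_{i≤n}, if B_i ≤ A_i for every i < n, then it is not the case that B_n < A_n. -/

import Mathlib

open Finset

variable {Ω : Type*}

/-- The measure of a finite set of states given weights `w`: `μ(A) = ∑_{ω ∈ A} w ω`. -/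
noncomputable def mea (w : Ω → ℝ) (A : Finset Ω) : ℝ := ∑ ω ∈ A, w ω

/-- `w` is a probability weight function: nonnegative and summing to 1. -/
def IsProbWeight [Fintype Ω] (w : Ω → ℝ) : Prop :=
  (∀ ω, 0 ≤ w ω) ∧ (∑ ω, w ω) = 1

/-- The measure is regular: only the empty set has measure 0. -/
def RegularW (w : Ω → ℝ) : Prop := ∀ X : Finset Ω, mea w X = 0 → X = ∅

/-- Conditional measure `μ_A(X) = μ(A ∩ X) / μ(A)`. -/
noncomputable def condMea [DecidableEq Ω] (w : Ω → ℝ) (A X : Finset Ω) : ℝ := mea w (A ∩ X) / mea w A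

/-- `X` is `(m,t)`-stable for a set function `m`: `X` is nonempty and for every `E` with
`X ∩ E ≠ ∅` and `m E > 0`, `m (X ∩ E) / m E > t`. -/
def StableFor [DecidableEq Ω] (m : Finset Ω → ℝ) (t : ℝ) (X : Finset Ω) : Prop :=
  X.Nonempty ∧ ∀ E : Finset Ω, (X ∩ E).Nonempty → 0 < m E → t < m (X ∩ E) / m E

/-- `S` is the `⊆`-least `(m,t)`-stable set. -/
def IsLeastStable [DecidableEq Ω] (m : Finset Ω → ℝ) (t : ℝ) (S : Finset Ω) : Prop :=
  StableFor m t S ∧ ∀ X : Finset Ω, StableFor m t X → S ⊆ X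

/-- `w` represents the selection function `σ` for threshold `t`. -/
def RepresentsAt [DecidableEq Ω] (w : Ω → ℝ) (t : ℝ) (σ : Finset Ω → Finset Ω) : Prop :=
  ∀ E : Finset Ω, (0 < mea w E → IsLeastStable (condMea w E) t (σ E)) ∧
    (mea w E = 0 → σ E = ∅)

/-- Selection axiom (S1): `σ(X) = ∅` only if `X = ∅`. -/
def SelA1 (σ : Finset Ω → Finset Ω) : Prop := ∀ X : Finset Ω, σ X = ∅ → X = ∅

/-- Selection axiom (S2): `σ(X) ⊆ X`. -/
def SelA2 (σ : Finset Ω → Finset Ω) : Prop := ∀ X : Finset Ω, σ X ⊆ X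

/-- Selection axiom (S3): if `σ(A) ∩ B ≠ ∅` then `σ(A ∩ B) ⊆ σ(A) ∩ B`. -/
def SelA3 [DecidableEq Ω] (σ : Finset Ω → Finset Ω) : Prop :=
  ∀ A B : Finset Ω, (σ A ∩ B).Nonempty → σ (A ∩ B) ⊆ σ A ∩ B

/-- Selection axiom (S4ₙ) for every `n`: if `σ(A ∪ Xᵢ) = Xᵢ` for all `i`, then
`σ(A ∪ ⋃ᵢ Xᵢ) ⊆ ⋃ᵢ Xᵢ`. -/
def SelA4 [DecidableEq Ω] (σ : Finset Ω → Finset Ω) : Prop :=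
  ∀ n : ℕ, ∀ A : Finset Ω, ∀ X : Fin (n + 1) → Finset Ω,
    (∀ i, σ (A ∪ X i) = X i) →
    σ (A ∪ univ.biUnion X) ⊆ univ.biUnion X

/-- `ω ≻_σ X` iff `ω ∉ X` and `σ (X ∪ {ω}) = {ω}`. -/
def succS [DecidableEq Ω] (σ : Finset Ω → Finset Ω) (ω : Ω) (X : Finset Ω) : Prop :=
  ω ∉ X ∧ σ (X ∪ {ω}) = {ω}

/-- `X ⪰_σ ω` iff `ω ∈ X` or `σ (X ∪ {ω}) ≠ {ω}`. -/
def succeqS [DecidableEq Ω] (σ : Finset Ω → Finset Ω) (X : Finset Ω) (ω : Ω) : Prop :=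
  ω ∈ X ∨ σ (X ∪ {ω}) ≠ {ω}

/-- `A ⪰*_σ B` iff either `A` is a singleton `{a}` with `a ≻_σ B`, or `B` is a singleton
`{b}` with `A ⪰_σ b`. -/
def geStar [DecidableEq Ω] (σ : Finset Ω → Finset Ω) (A B : Finset Ω) : Prop :=
  (∃ a, A = {a} ∧ succS σ a B) ∨ (∃ b, B = {b} ∧ succeqS σ A b)

/-- Two sequences of sets are balanced: every state occurs in exactly as many `A i`'s
as `B i`'s. -/
def BalancedSeq {n : ℕ} (A B : Fin n → Finset Ω) : Prop :=
  ∀ ω : Ω, Nat.card {i // ω ∈ A i} = Nat.card {i // ω ∈ B i}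

/-- `(A_i) ≤₀ (B_i)`: every state occurs in at most as many `A i`'s as `B i`'s. -/
def DomSeq {n : ℕ} (A B : Fin n → Finset Ω) : Prop :=
  ∀ ω : Ω, Nat.card {i // ω ∈ A i} ≤ Nat.card {i // ω ∈ B i}

/-- The (Scott) axiom for the induced order `⪰*_σ`. -/
def ScottAx [DecidableEq Ω] (σ : Finset Ω → Finset Ω) : Prop :=
  ∀ n : ℕ, ∀ A B : Fin (n + 1) → Finset Ω, BalancedSeq A B →
    (∀ i, geStar σ (A i) (B i)) → ∀ i, geStar σ (B i) (A i)

/-- Algebraic Farkas lemma over an ordered field (here the rationals). -/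
theorem farkas_aux {E : Type*} [AddCommGroup E] [Module ℚ E] {ι : Type*} [DecidableEq ι]
    (s : Finset ι) : ∀ (a : ι → E →ₗ[ℚ] ℚ) (b : E →ₗ[ℚ] ℚ),
    (∀ x, (∀ i ∈ s, 0 ≤ a i x) → 0 ≤ b x) →
    ∃ c : ι → ℚ, (∀ i, 0 ≤ c i) ∧ ∀ x, b x = ∑ i ∈ s, c i * a i x := by
  induction s using Finset.induction_on with
  | empty =>
    intro a b h
    refine ⟨fun _ => 0, fun _ => le_rfl, fun x => ?_⟩
    have h1 := h x (by simp)
    have h2 := h (-x) (by simp)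
    rw [map_neg] at h2
    simp only [Finset.sum_empty]
    linarith
  | insert j s hj ih =>
    intro a b h
    by_cases hb : ∀ x, (∀ i ∈ s, 0 ≤ a i x) → 0 ≤ b x
    · obtain ⟨c, hc, hcb⟩ := ih a b hb
      refine ⟨fun i => if i = j then 0 else c i, fun i => ?_, fun x => ?_⟩
      · dsimp only
        split_ifs
        · exact le_rfl
        · exact hc i
      · rw [Finset.sum_insert hj, hcb x]
        simp only [if_true, zero_mul, zero_add]
        refine Finset.sum_congr rfl fun i hi => ?_
        rw [if_neg]
        rintro rfl
        exact hj hi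
    · push Not at hb
      obtain ⟨y, hy, hby⟩ := hb
      have hajy : a j y < 0 := by
        by_contra hcon
        push Not at hcon
        have := h y (by
          intro i hi
          rcases Finset.mem_insert.1 hi with rfl | hi
          · exact hcon
          · exact hy i hi)
        linarith
      obtain ⟨t, ht, htj⟩ : ∃ t : ℚ, 0 < t ∧ t * a j y = -1 := by
        refine ⟨-(a j y)⁻¹, ?_, ?_⟩
        · have := inv_lt_zero.2 hajy
          linarith
        · field_simp [hajy.ne]
      obtain ⟨c, hc, hcb⟩ := ih (fun i => a i + (t * a i y) • a j) (b + (t * b y) • a j) (by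
        intro x hx
        have key := h (x + (a j x * t) • y) (by
          intro i hi
          rcases Finset.mem_insert.1 hi with rfl | hi
          · simp only [map_add, map_smul, smul_eq_mul]
            rw [mul_assoc, htj]
            linarith
          · have := hx i hi
            simp only [LinearMap.add_apply, LinearMap.smul_apply, smul_eq_mul] at this
            simp only [map_add, map_smul, smul_eq_mul]
            linarith)
        simp only [map_add, map_smul, smul_eq_mul] at key
        simp only [LinearMap.add_apply, LinearMap.smul_apply, smul_eq_mul]
        linarith)
      have hS : 0 ≤ ∑ i ∈ s, c i * (t * a i y) :=
        Finset.sum_nonneg fun i hi => mul_nonneg (hc i) (mul_nonneg ht.le (hy i hi))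
      have htb : t * b y < 0 := mul_neg_of_pos_of_neg ht hby
      refine ⟨fun i => if i = j then (∑ i ∈ s, c i * (t * a i y)) - t * b y else c i,
        fun i => ?_, fun x => ?_⟩
      · dsimp only
        split_ifs
        · linarith
        · exact hc i
      · rw [Finset.sum_insert hj]
        have e : ∑ i ∈ s, (if i = j then (∑ i ∈ s, c i * (t * a i y)) - t * b y else c i) * a i x
            = ∑ i ∈ s, c i * a i x := by
          refine Finset.sum_congr rfl fun i hi => ?_
          rw [if_neg]
          rintro rfl
          exact hj hi
        rw [e]
        dsimp only
        rw [if_pos rfl]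
        have := hcb x
        simp only [LinearMap.add_apply, LinearMap.smul_apply, smul_eq_mul, mul_add,
          Finset.sum_add_distrib] at this
        have e2 : ∑ i ∈ s, c i * (t * a i y * a j x) = (∑ i ∈ s, c i * (t * a i y)) * a j x := by
          rw [Finset.sum_mul]
          exact Finset.sum_congr rfl fun i _ => by ring
        rw [e2] at this
        linarith

/-- Clearing denominators. -/
theorem clear_denoms {ι : Type*} [Fintype ι] (c : ι → ℚ) (hc : ∀ i, 0 ≤ c i) :
    ∃ (N : ℕ) (n : ι → ℕ), ∀ i, ((N : ℚ) + 1) * c i = n i := by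
  classical
  have hpos : 0 < ∏ i, (c i).den := Finset.prod_pos fun i _ => (c i).den_pos
  refine ⟨(∏ i, (c i).den) - 1,
    fun i => (∏ k ∈ univ.erase i, (c k).den) * (c i).num.toNat, fun i => ?_⟩
  have h1 : (((∏ i, (c i).den) - 1 : ℕ) : ℚ) + 1 = ((∏ i, (c i).den : ℕ) : ℚ) := by
    rw [← Nat.cast_succ]
    congr 1
    omega
  rw [h1, ← Finset.prod_erase_mul univ _ (Finset.mem_univ i)]
  have h2 : (((c i).num.toNat : ℕ) : ℚ) = (c i).num := by
    have : (((c i).num.toNat : ℕ) : ℤ) = (c i).num :=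
      Int.toNat_of_nonneg (Rat.num_nonneg.2 (hc i))
    exact_mod_cast this
  rw [Nat.cast_mul, Nat.cast_mul, h2, mul_assoc]
  congr 1
  rw [mul_comm, Rat.mul_den_eq_num]

theorem natcard_eq_sum {Ω : Type*} [DecidableEq Ω] {J : Type*} [Fintype J] (A : J → Finset Ω)
    (ω : Ω) : Nat.card {i // ω ∈ A i} = ∑ i, if ω ∈ A i then 1 else 0 := by
  rw [Nat.card_eq_fintype_card, Fintype.card_subtype, Finset.card_filter]

theorem sum_mea_eq {Ω : Type*} [Fintype Ω] [DecidableEq Ω] {J : Type*} [Fintype J]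
    (w : Ω → ℝ) (A : J → Finset Ω) :
    ∑ i, mea w (A i) = ∑ ω, w ω * (Nat.card {i // ω ∈ A i} : ℝ) := by
  have : ∀ i, mea w (A i) = ∑ ω, w ω * (if ω ∈ A i then 1 else 0) := by
    intro i
    simp [mea]
  simp only [this, natcard_eq_sum]
  rw [Finset.sum_comm]
  refine Finset.sum_congr rfl fun ω _ => ?_
  push_cast
  rw [Finset.mul_sum]

theorem splus_fintype {Ω : Type*} [Fintype Ω] [DecidableEq Ω]
    (lt le : Finset Ω → Finset Ω → Prop)
    (H : ∀ n : ℕ, ∀ A B : Fin (n + 1) → Finset Ω, DomSeq A B →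
        (∀ i : Fin n, le (B i.castSucc) (A i.castSucc)) →
        ¬ lt (B (Fin.last n)) (A (Fin.last n)))
    {J : Type*} [Fintype J] (f g : J → Finset Ω) (hfg : ∀ j, le (g j) (f j))
    (X Y : Finset Ω) (hXY : lt X Y)
    (hdom : ∀ ω, ((∑ j, if ω ∈ f j then 1 else 0) + if ω ∈ Y then 1 else 0 : ℕ) ≤
      (∑ j, if ω ∈ g j then 1 else 0) + if ω ∈ X then 1 else 0) : False := by
  let e := Fintype.equivFin J
  refine H (Fintype.card J) (Fin.snoc (α := fun _ => Finset Ω) (fun i => f (e.symm i)) Y)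
    (Fin.snoc (α := fun _ => Finset Ω) (fun i => g (e.symm i)) X) ?_ ?_ ?_
  · intro ω
    rw [natcard_eq_sum, natcard_eq_sum, Fin.sum_univ_castSucc, Fin.sum_univ_castSucc]
    simp only [Fin.snoc_castSucc, Fin.snoc_last]
    rw [e.symm.sum_comp (fun j => if ω ∈ f j then 1 else 0),
      e.symm.sum_comp (fun j => if ω ∈ g j then 1 else 0)]
    exact hdom ω
  · intro i
    simp only [Fin.snoc_castSucc]
    exact hfg _
  · simpa only [Fin.snoc_last] using hXY

/-- For each strict pair there is a nonnegative rational weight respecting `le` and strict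
on that pair. -/
theorem exists_weight {Ω : Type*} [Fintype Ω] [DecidableEq Ω]
    (lt le : Finset Ω → Finset Ω → Prop) (hsub : ∀ A B : Finset Ω, lt A B → le A B)
    (H : ∀ n : ℕ, ∀ A B : Fin (n + 1) → Finset Ω, DomSeq A B →
        (∀ i : Fin n, le (B i.castSucc) (A i.castSucc)) →
        ¬ lt (B (Fin.last n)) (A (Fin.last n)))
    (X Y : Finset Ω) (hXY : lt X Y) :
    ∃ w : Ω → ℚ, (∀ ω, 0 ≤ w ω) ∧ (∀ A B, le A B → ∑ ω ∈ A, w ω ≤ ∑ ω ∈ B, w ω) ∧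
      ∑ ω ∈ X, w ω < ∑ ω ∈ Y, w ω := by
  classical
  by_contra hcon
  push Not at hcon
  let m : Finset Ω → (Ω → ℚ) →ₗ[ℚ] ℚ := fun A => ∑ ω ∈ A, LinearMap.proj ω
  have hm : ∀ A x, m A x = ∑ ω ∈ A, x ω := by
    intro A x
    simp [m]
  let P := {p : Finset Ω × Finset Ω // le p.1 p.2}
  let a : Ω ⊕ P → (Ω → ℚ) →ₗ[ℚ] ℚ :=
    Sum.elim (fun ω => LinearMap.proj ω) (fun p => m p.1.2 - m p.1.1)
  obtain ⟨c, hc, hcb⟩ := farkas_aux univ a (m X - m Y) (by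
    intro x hx
    have := hcon x (fun ω => by simpa [a] using hx (Sum.inl ω) (mem_univ _))
      (fun A B hAB => by
        have := hx (Sum.inr ⟨(A, B), hAB⟩) (mem_univ _)
        simp only [a, Sum.elim_inr, LinearMap.sub_apply, hm] at this
        linarith)
    simp only [LinearMap.sub_apply, hm]
    linarith)
  obtain ⟨N, n, hn⟩ := clear_denoms c hc
  let J := (Σ p : P, Fin (n (Sum.inr p))) ⊕ Fin N
  refine splus_fintype lt le H (J := J)
    (Sum.elim (fun q => q.1.1.2) (fun _ => Y)) (Sum.elim (fun q => q.1.1.1) (fun _ => X))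
    ?_ X Y hXY ?_
  · rintro (q | i)
    · exact q.1.2
    · exact hsub _ _ hXY
  · intro ω
    have hms : ∀ A, m A (Pi.single ω 1) = if ω ∈ A then 1 else 0 := by
      intro A
      rw [hm]
      simp [Pi.single_apply]
    have key := hcb (Pi.single ω 1)
    have hnn : ∀ ω', 0 ≤ c (Sum.inl ω') * (Pi.single ω (1:ℚ) : Ω → ℚ) ω' := by
      intro ω'
      refine mul_nonneg (hc _) ?_
      rw [Pi.single_apply]
      split_ifs <;> norm_num
    have hnn2 := Finset.sum_nonneg fun ω' (_ : ω' ∈ univ) => hnn ω'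
    rw [Fintype.sum_sum_type] at key
    simp only [a, Sum.elim_inl, Sum.elim_inr, LinearMap.sub_apply, hms,
      LinearMap.proj_apply] at key
    have key2 : ∑ p : P, c (Sum.inr p) * ((if ω ∈ p.1.2 then 1 else 0) -
        (if ω ∈ p.1.1 then 1 else 0)) ≤ (if ω ∈ X then 1 else 0) - (if ω ∈ Y then 1 else 0) := by
      linarith
    have key3 := mul_le_mul_of_nonneg_left key2 (by positivity : (0:ℚ) ≤ (N : ℚ) + 1)
    rw [Finset.mul_sum] at key3
    simp only [← mul_assoc, hn, mul_sub, Finset.sum_sub_distrib] at key3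
    let χ : Finset Ω → ℕ := fun A => if ω ∈ A then 1 else 0
    have hχ : ∀ A, (if ω ∈ A then (1 : ℚ) else 0) = (χ A : ℚ) := by
      intro A
      simp [χ]
    simp only [hχ] at key3
    have gen : ∀ (F : P → Finset Ω) (Z : Finset Ω),
        ((∑ j : J, χ (Sum.elim (fun q => F q.1) (fun _ => Z) j) + χ Z : ℕ) : ℚ) =
        (∑ p : P, (n (Sum.inr p) : ℚ) * χ (F p)) + ((N : ℚ) + 1) * χ Z := by
      intro F Z
      rw [Fintype.sum_sum_type, Fintype.sum_sigma]
      simp only [Sum.elim_inl, Sum.elim_inr, Finset.sum_const, Finset.card_univ, Fintype.card_fin,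
        smul_eq_mul]
      push_cast
      ring
    change (∑ j : J, χ (Sum.elim (fun q => q.1.1.2) (fun _ => Y) j)) + χ Y ≤
      (∑ j : J, χ (Sum.elim (fun q => q.1.1.1) (fun _ => X) j)) + χ X
    have g1 := gen (fun p => p.1.2) Y
    have g2 := gen (fun p => p.1.1) X
    rw [← Nat.cast_le (α := ℚ), g1, g2]
    linarith

/-- Representation theorem, second formulation: with `<` and `≤` nonempty
and `< ⊆ ≤`, the pair `(<, ≤)` is jointly weakly representable iff condition (S+) holds. -/
theorem stmt1 [Fintype Ω] [Nonempty Ω]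
    (lt le : Finset Ω → Finset Ω → Prop)
    (hlt : ∃ A B : Finset Ω, lt A B)
    (hle : ∃ A B : Finset Ω, le A B)
    (hsub : ∀ A B : Finset Ω, lt A B → le A B) :
    (∃ w : Ω → ℝ, IsProbWeight w ∧
        (∀ A B : Finset Ω, lt A B → mea w A < mea w B) ∧
        (∀ A B : Finset Ω, le A B → mea w A ≤ mea w B)) ↔
      (∀ n : ℕ, ∀ A B : Fin (n + 1) → Finset Ω, DomSeq A B →
        (∀ i : Fin n, le (B i.castSucc) (A i.castSucc)) →
        ¬ lt (B (Fin.last n)) (A (Fin.last n))) := by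

  classical
  constructor
  · rintro ⟨w, ⟨hw0, -⟩, hwlt, hwle⟩ n A B hdom hi hl
    have h1 : ∑ i, mea w (A i) ≤ ∑ i, mea w (B i) := by
      rw [sum_mea_eq, sum_mea_eq]
      refine Finset.sum_le_sum fun ω _ => mul_le_mul_of_nonneg_left ?_ (hw0 ω)
      exact_mod_cast hdom ω
    rw [Fin.sum_univ_castSucc, Fin.sum_univ_castSucc] at h1
    have h2 := hwlt _ _ hl
    have h3 : ∑ i : Fin n, mea w (B i.castSucc) ≤ ∑ i : Fin n, mea w (A i.castSucc) :=
      Finset.sum_le_sum fun i _ => hwle _ _ (hi i)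
    linarith
  · intro H
    let Q := {p : Finset Ω × Finset Ω // lt p.1 p.2}
    choose u hu0 hule hult using fun q : Q => exists_weight lt le hsub H q.1.1 q.1.2 q.2
    let v : Ω → ℚ := fun ω => ∑ q, u q ω
    have hv0 : ∀ ω, 0 ≤ v ω := fun ω => Finset.sum_nonneg fun q _ => hu0 q ω
    have hvs : ∀ A : Finset Ω, ∑ ω ∈ A, v ω = ∑ q, ∑ ω ∈ A, u q ω := fun A => Finset.sum_comm
    have hvle : ∀ A B, le A B → ∑ ω ∈ A, v ω ≤ ∑ ω ∈ B, v ω := by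
      intro A B h
      rw [hvs, hvs]
      exact Finset.sum_le_sum fun q _ => hule q A B h
    have hvlt : ∀ A B, lt A B → ∑ ω ∈ A, v ω < ∑ ω ∈ B, v ω := by
      intro A B h
      rw [hvs, hvs]
      exact Finset.sum_lt_sum (fun q _ => hule q A B (hsub _ _ h))
        ⟨⟨(A, B), h⟩, mem_univ _, hult ⟨(A, B), h⟩⟩
    have hT : 0 < ∑ ω, v ω := by
      obtain ⟨A, B, h⟩ := hlt
      calc 0 ≤ ∑ ω ∈ A, v ω := Finset.sum_nonneg fun ω _ => hv0 ω
        _ < ∑ ω ∈ B, v ω := hvlt _ _ h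
        _ ≤ ∑ ω, v ω := Finset.sum_le_sum_of_subset_of_nonneg (subset_univ _) fun ω _ _ => hv0 ω
    have hmea : ∀ A : Finset Ω, mea (fun ω => ((v ω / ∑ ω, v ω : ℚ) : ℝ)) A
        = (((∑ ω ∈ A, v ω) / ∑ ω, v ω : ℚ) : ℝ) := by
      intro A
      rw [mea, Finset.sum_div, Rat.cast_sum]
    refine ⟨fun ω => ((v ω / ∑ ω, v ω : ℚ) : ℝ), ⟨fun ω => ?_, ?_⟩, fun A B h => ?_,
      fun A B h => ?_⟩
    · dsimp only
      exact_mod_cast div_nonneg (hv0 ω) hT.le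
    · have := hmea univ
      rw [mea, div_self hT.ne'] at this
      simpa using this
    · rw [hmea, hmea, Rat.cast_lt]
      exact div_lt_div_of_pos_right (hvlt A B h) hT
    · rw [hmea, hmea, Rat.cast_le]
      exact div_le_div_of_nonneg_right (hvle A B h) hT.le
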